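/- arXiv:1812.01332 — 2 statements merged into one kernel-verified Lean document; each statement's English description precedes it below -/
import Mathlib

section
/- Let n ≥ 1, let a : Fin n → ℝ, and let ε > 0. If there are no indices i, j with a i < a j ≤ a i + ε, then every point of S(a, ε) is an extreme point of the convex hull of S(a, ε); that is, S(a, ε) ⊆ extremePoints ℝ (convexHull ℝ S(a, ε)). -/
/-!
For every `k` the line through `L_k` and `T_k` has slope `2 a_k + ε`. Relative to it the heights of
`L_j` and `T_j` are `d (d - ε)` and `d ^ 2`, where `d = a_j - a_k`. The gap condition says that
`d ≤ 0` or `ε < d`, so both heights are nonnegative and vanish only for `d = 0`. Hence the segment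
`L_k T_k` is an edge of the convex hull, and its two endpoints are extreme: each is the unique
lexicographic minimiser of the height followed by `x` or `-x`.
-/

section LexOrder

variable {𝕜 F G : Type*} [Semiring 𝕜] [PartialOrder 𝕜]
  [AddCommMonoid F] [PartialOrder F] [Module 𝕜 F] [PosSMulStrictMono 𝕜 F]
  [AddCommMonoid G] [PartialOrder G] [Module 𝕜 G] [PosSMulStrictMono 𝕜 G]

instance instPosSMulStrictMonoLexProd : PosSMulStrictMono 𝕜 (F ×ₗ G) where
  smul_lt_smul_of_pos_left s hs u v huv := by
    rw [Prod.Lex.lt_iff] at huv ⊢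
    exact huv.imp (smul_lt_smul_of_pos_left · hs)
      fun ⟨hfst, hsnd⟩ ↦ ⟨congrArg (s • ·) hfst, smul_lt_smul_of_pos_left hsnd hs⟩

end LexOrder

section UniqueMinimiser

variable {𝕜 E F : Type*} [Semiring 𝕜] [PartialOrder 𝕜] [AddCommMonoid E] [Module 𝕜 E]
  [AddCommMonoid F] [PartialOrder F] [IsOrderedCancelAddMonoid F] [Module 𝕜 F]
  [PosSMulStrictMono 𝕜 F]

theorem lt_map_of_mem_openSegment {f : E →ₗ[𝕜] F} {c : F} {x y z : E} (hx : c < f x)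
    (hy : c ≤ f y) (hz : z ∈ openSegment 𝕜 x y) : c < f z := by
  obtain ⟨s, t, hs, ht, hst, rfl⟩ := hz
  calc
    c = s • c + t • c := (Convex.combo_self hst c).symm
    _ < s • f x + t • f y :=
      add_lt_add_of_lt_of_le (smul_lt_smul_of_pos_left hx hs) (smul_le_smul_of_nonneg_left hy ht.le)
    _ = f (s • x + t • y) := by simp

theorem convex_insert_setOf_lt_map [ZeroLEOneClass 𝕜] (f : E →ₗ[𝕜] F) (p : E) :
    Convex 𝕜 (insert p {q | f p < f q}) := by
  rw [convex_iff_openSegment_subset]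
  rintro x (rfl | hx) y (rfl | hy) z hz
  · exact Or.inl ((convex_singleton _).openSegment_subset rfl rfl hz)
  · exact Or.inr (lt_map_of_mem_openSegment hy le_rfl (openSegment_symm 𝕜 x y ▸ hz))
  · exact Or.inr (lt_map_of_mem_openSegment hx le_rfl hz)
  · exact Or.inr (lt_map_of_mem_openSegment hx (le_of_lt hy) hz)

theorem mem_extremePoints_convexHull_of_forall_lt_map [ZeroLEOneClass 𝕜] {S : Set E} {p : E}
    (f : E →ₗ[𝕜] F) (hp : p ∈ S) (hS : ∀ q ∈ S, q ≠ p → f p < f q) :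
    p ∈ (convexHull 𝕜 S).extremePoints 𝕜 := by
  have hull_subset : convexHull 𝕜 S ⊆ insert p {q | f p < f q} :=
    convexHull_min (fun q hq ↦ or_iff_not_imp_left.2 (hS q hq)) (convex_insert_setOf_lt_map f p)
  refine mem_extremePoints_iff_left.2 ⟨subset_convexHull 𝕜 S hp, fun x hx y hy hpxy ↦ ?_⟩
  refine (hull_subset hx).resolve_right fun hlt ↦ ?_
  have hle : f p ≤ f y := (hull_subset hy).elim (fun h ↦ h ▸ le_rfl) le_of_lt
  exact (lt_map_of_mem_openSegment hlt hle hpxy).false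

end UniqueMinimiser

section DoubledParabola

variable {ι 𝕜 : Type*} [Field 𝕜]

/-- The point `L_k` of the configuration, as a function of `t = a k`. -/
def lowerPoint (t : 𝕜) : 𝕜 × 𝕜 := (t, t ^ 2)

/-- The point `T_k` of the configuration, as a function of `ε` and `t = a k`. -/
def upperPoint (ε t : 𝕜) : 𝕜 × 𝕜 := (t + ε / 2, (t + ε / 2) ^ 2 + ε ^ 2 / 4)

/-- The configuration `S(a, ε)`. -/
def pointSet (a : ι → 𝕜) (ε : 𝕜) : Set (𝕜 × 𝕜) :=
  {q | ∃ k, q = lowerPoint (a k)} ∪ {q | ∃ k, q = upperPoint ε (a k)}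

/-- The height of a point above the line through `lowerPoint t` and `upperPoint ε t`, up to an
additive constant chosen to make it linear. -/
def edgeHeight (ε t : 𝕜) : 𝕜 × 𝕜 →ₗ[𝕜] 𝕜 :=
  LinearMap.snd 𝕜 𝕜 𝕜 - (2 * t + ε) • LinearMap.fst 𝕜 𝕜 𝕜

/-- `edgeHeight ε t` with ties broken by the linear form `g`. -/
def edgeLex (ε t : 𝕜) (g : 𝕜 × 𝕜 →ₗ[𝕜] 𝕜) : 𝕜 × 𝕜 →ₗ[𝕜] 𝕜 ×ₗ 𝕜 :=
  (toLexLinearEquiv 𝕜 (𝕜 × 𝕜)).toLinearMap ∘ₗ (edgeHeight ε t).prod g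

theorem edgeHeight_lowerPoint (ε t s : 𝕜) :
    edgeHeight ε t (lowerPoint s) = (s - t) * (s - t - ε) - t * (t + ε) := by
  simp only [edgeHeight, lowerPoint, LinearMap.sub_apply, LinearMap.smul_apply,
    LinearMap.fst_apply, LinearMap.snd_apply, smul_eq_mul]
  ring

theorem edgeHeight_upperPoint [CharZero 𝕜] (ε t s : 𝕜) :
    edgeHeight ε t (upperPoint ε s) = (s - t) ^ 2 - t * (t + ε) := by
  simp only [edgeHeight, upperPoint, LinearMap.sub_apply, LinearMap.smul_apply,
    LinearMap.fst_apply, LinearMap.snd_apply, smul_eq_mul]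
  ring

theorem edgeHeight_upperPoint_self [CharZero 𝕜] (ε t : 𝕜) :
    edgeHeight ε t (upperPoint ε t) = edgeHeight ε t (lowerPoint t) := by
  simp [edgeHeight_lowerPoint, edgeHeight_upperPoint]

variable [LinearOrder 𝕜] {a : ι → 𝕜} {ε : 𝕜}

theorem edgeLex_lt_iff {t : 𝕜} {g : 𝕜 × 𝕜 →ₗ[𝕜] 𝕜} {p q : 𝕜 × 𝕜} :
    edgeLex ε t g p < edgeLex ε t g q ↔
      edgeHeight ε t p < edgeHeight ε t q ∨ edgeHeight ε t p = edgeHeight ε t q ∧ g p < g q :=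
  Prod.Lex.lt_iff

variable [IsStrictOrderedRing 𝕜]

theorem edgeHeight_self_lt_lowerPoint {s t : 𝕜} (hε : 0 < ε) (hst : s ≠ t)
    (hgap : t < s → t + ε < s) :
    edgeHeight ε t (lowerPoint t) < edgeHeight ε t (lowerPoint s) := by
  have hpos : 0 < (s - t) * (s - t - ε) := by
    rcases hst.lt_or_gt with hlt | hgt
    · exact mul_pos_of_neg_of_neg (by linarith) (by linarith)
    · exact mul_pos (by linarith) (by linarith [hgap hgt])
  simpa [edgeHeight_lowerPoint] using hpos

theorem edgeHeight_self_lt_upperPoint {s t : 𝕜} (hst : s ≠ t) :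
    edgeHeight ε t (upperPoint ε t) < edgeHeight ε t (upperPoint ε s) := by
  have hpos : 0 < (s - t) ^ 2 := sq_pos_of_ne_zero (sub_ne_zero.2 hst)
  simpa [edgeHeight_upperPoint] using hpos

theorem edgeHeight_lt_or_eq_of_mem_pointSet (hε : 0 < ε)
    (hgap : ∀ i j, a i < a j → a i + ε < a j) (k : ι) {q : 𝕜 × 𝕜} (hq : q ∈ pointSet a ε) :
    edgeHeight ε (a k) (lowerPoint (a k)) < edgeHeight ε (a k) q ∨
      q = lowerPoint (a k) ∨ q = upperPoint ε (a k) := by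
  rcases hq with ⟨j, rfl⟩ | ⟨j, rfl⟩ <;> by_cases hjk : a j = a k
  · exact Or.inr (Or.inl (by rw [hjk]))
  · exact Or.inl (edgeHeight_self_lt_lowerPoint hε hjk (hgap k j))
  · exact Or.inr (Or.inr (by rw [hjk]))
  · exact Or.inl (edgeHeight_upperPoint_self ε (a k) ▸ edgeHeight_self_lt_upperPoint hjk)

theorem lowerPoint_mem_extremePoints (hε : 0 < ε) (hgap : ∀ i j, a i < a j → a i + ε < a j)
    (k : ι) : lowerPoint (a k) ∈ (convexHull 𝕜 (pointSet a ε)).extremePoints 𝕜 := by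
  refine mem_extremePoints_convexHull_of_forall_lt_map
    (edgeLex ε (a k) (LinearMap.fst 𝕜 𝕜 𝕜)) (Or.inl ⟨k, rfl⟩) fun q hq hne ↦ ?_
  rw [edgeLex_lt_iff]
  rcases edgeHeight_lt_or_eq_of_mem_pointSet hε hgap k hq with hlt | rfl | rfl
  · exact Or.inl hlt
  · exact absurd rfl hne
  · exact Or.inr ⟨(edgeHeight_upperPoint_self _ _).symm, by simp [lowerPoint, upperPoint, hε]⟩

theorem upperPoint_mem_extremePoints (hε : 0 < ε) (hgap : ∀ i j, a i < a j → a i + ε < a j)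
    (k : ι) : upperPoint ε (a k) ∈ (convexHull 𝕜 (pointSet a ε)).extremePoints 𝕜 := by
  refine mem_extremePoints_convexHull_of_forall_lt_map
    (edgeLex ε (a k) (-LinearMap.fst 𝕜 𝕜 𝕜)) (Or.inr ⟨k, rfl⟩) fun q hq hne ↦ ?_
  rw [edgeLex_lt_iff, edgeHeight_upperPoint_self]
  rcases edgeHeight_lt_or_eq_of_mem_pointSet hε hgap k hq with hlt | rfl | rfl
  · exact Or.inl hlt
  · exact Or.inr ⟨rfl, by simp [lowerPoint, upperPoint, hε]⟩
  · exact absurd rfl hne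

theorem all_extreme_points_general (hε : 0 < ε) (hgap : ∀ i j, a i < a j → a i + ε < a j) :
    pointSet a ε ⊆ (convexHull 𝕜 (pointSet a ε)).extremePoints 𝕜 := by
  rintro _ (⟨k, rfl⟩ | ⟨k, rfl⟩)
  · exact lowerPoint_mem_extremePoints hε hgap k
  · exact upperPoint_mem_extremePoints hε hgap k

end DoubledParabola

theorem all_extreme_points (n : ℕ) (hn : 1 ≤ n) (a : Fin n → ℝ) (ε : ℝ)
    (hε : 0 < ε)
    (h : ¬∃ i j : Fin n, a i < a j ∧ a j ≤ a i + ε) :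
    ({q : ℝ × ℝ | ∃ k : Fin n, q = (a k, (a k)^2)} ∪
     {q : ℝ × ℝ | ∃ k : Fin n, q = (a k + ε/2, (a k + ε/2)^2 + ε^2/4)}) ⊆
    Set.extremePoints ℝ (convexHull ℝ
      ({q : ℝ × ℝ | ∃ k : Fin n, q = (a k, (a k)^2)} ∪
       {q : ℝ × ℝ | ∃ k : Fin n, q = (a k + ε/2, (a k + ε/2)^2 + ε^2/4)})) :=
  all_extreme_points_general hε fun i j hij ↦ not_le.1 fun hle ↦ h ⟨i, j, hij, hle⟩
end

section
/- Let n ≥ 1, let a : Fin n → ℝ, let ε > 0, and suppose there exist indices i, j with a j = a i + ε. Then T_i lies in the open segment between L_i and L_j, and is distinct from both; consequently T_i ∈ convexHull ℝ S(a, ε) but T_i is not an extreme point of convexHull ℝ S(a, ε). -/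
/-!
Since `(x² + (x + ε)²) / 2 = (x + ε/2)² + ε²/4`, the point `T` over `x + ε/2` is the midpoint of the
chord joining the points of the parabola over `x` and `x + ε`. For `ε ≠ 0` this chord is
nondegenerate, and the midpoint of a nondegenerate segment is never extreme.
-/

theorem midpoint_notMem_extremePoints {K E : Type*} [Ring K] [LinearOrder K]
    [IsStrictOrderedRing K] [Invertible (2 : K)] [AddCommGroup E] [Module K E] {s : Set E}
    {p q : E} (hp : p ∈ s) (hq : q ∈ s) (hpq : p ≠ q) : midpoint K p q ∉ s.extremePoints K :=
  fun h ↦ hpq <| (left_eq_midpoint_iff K).1 <| h.2 hp hq <| midpoint_mem_openSegment p q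

/-- The point `(x, x²)` of the standard parabola: the paper's `L_k` is `parabolaPoint (a k)`. -/
def parabolaPoint {M : Type*} [Monoid M] (x : M) : M × M :=
  (x, x ^ 2)

/-- The point at height `ε²/4` above the point of the standard parabola over `x + ε/2`: the paper's
`T_k` is `raisedPoint ε (a k)`. -/
def raisedPoint {K : Type*} [Field K] (ε x : K) : K × K :=
  (x + ε / 2, (x + ε / 2) ^ 2 + ε ^ 2 / 4)

theorem parabolaPoint_injective {M : Type*} [Monoid M] :
    Function.Injective (parabolaPoint : M → M × M) :=
  fun _ _ h ↦ congrArg Prod.fst h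

theorem midpoint_parabolaPoint_add {K : Type*} [Field K] [Invertible (2 : K)] (ε x : K) :
    midpoint K (parabolaPoint x) (parabolaPoint (x + ε)) = raisedPoint ε x := by
  have two_ne : (2 : K) ≠ 0 := Invertible.ne_zero 2
  have four_eq : (4 : K) = 2 ^ 2 := by norm_num
  simp only [midpoint_eq_smul_add, invOf_eq_inv, parabolaPoint, raisedPoint, four_eq,
    Prod.mk_add_mk, Prod.smul_mk, smul_eq_mul, Prod.mk.injEq]
  constructor <;> field_simp <;> ring

theorem Ti_in_open_segment_when_eq_general {K : Type*} [Field K] [LinearOrder K]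
    [IsStrictOrderedRing K] {S : Set (K × K)} {ε x : K} (hε : ε ≠ 0) (hx : parabolaPoint x ∈ S)
    (hxε : parabolaPoint (x + ε) ∈ S) :
    raisedPoint ε x ∈ openSegment K (parabolaPoint x) (parabolaPoint (x + ε)) ∧
    raisedPoint ε x ≠ parabolaPoint x ∧
    raisedPoint ε x ≠ parabolaPoint (x + ε) ∧
    raisedPoint ε x ∈ convexHull K S ∧
    raisedPoint ε x ∉ (convexHull K S).extremePoints K := by
  have hne : parabolaPoint x ≠ parabolaPoint (x + ε) :=
    parabolaPoint_injective.ne (left_ne_add.2 hε)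
  have hx_hull := subset_convexHull K S hx
  have hxε_hull := subset_convexHull K S hxε
  rw [← midpoint_parabolaPoint_add]
  exact ⟨midpoint_mem_openSegment _ _, mt (midpoint_eq_left_iff K).1 hne,
    mt (midpoint_eq_right_iff K).1 hne, (convex_convexHull K S).midpoint_mem hx_hull hxε_hull,
    midpoint_notMem_extremePoints hx_hull hxε_hull hne⟩

theorem Ti_in_open_segment_when_eq (n : ℕ) (hn : 1 ≤ n) (a : Fin n → ℝ) (ε : ℝ)
    (hε : 0 < ε) (i j : Fin n) (hij : a j = a i + ε) :
    ((a i + ε/2, (a i + ε/2)^2 + ε^2/4) : ℝ × ℝ) ∈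
      openSegment ℝ ((a i, (a i)^2) : ℝ × ℝ) ((a j, (a j)^2) : ℝ × ℝ) ∧
    ((a i + ε/2, (a i + ε/2)^2 + ε^2/4) : ℝ × ℝ) ≠ ((a i, (a i)^2) : ℝ × ℝ) ∧
    ((a i + ε/2, (a i + ε/2)^2 + ε^2/4) : ℝ × ℝ) ≠ ((a j, (a j)^2) : ℝ × ℝ) ∧
    ((a i + ε/2, (a i + ε/2)^2 + ε^2/4) : ℝ × ℝ) ∈
      convexHull ℝ ({q : ℝ × ℝ | ∃ k : Fin n, q = (a k, (a k)^2)} ∪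
        {q : ℝ × ℝ | ∃ k : Fin n, q = (a k + ε/2, (a k + ε/2)^2 + ε^2/4)}) ∧
    ((a i + ε/2, (a i + ε/2)^2 + ε^2/4) : ℝ × ℝ) ∉
      Set.extremePoints ℝ (convexHull ℝ
        ({q : ℝ × ℝ | ∃ k : Fin n, q = (a k, (a k)^2)} ∪
         {q : ℝ × ℝ | ∃ k : Fin n, q = (a k + ε/2, (a k + ε/2)^2 + ε^2/4)})) := by
  rw [hij]
  exact Ti_in_open_segment_when_eq_general hε.ne' (.inl ⟨i, rfl⟩)
    (.inl ⟨j, congrArg parabolaPoint hij.symm⟩)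
end
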